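/- arXiv:2211.12316 — 2 statements merged into one kernel-verified Lean document; each statement's English description precedes it below -/
import Mathlib

section
/- Let k ≥ 0 and let f, g : {0,1}^n → {±1} be Boolean functions with maximum sensitivity ms(f) ≤ k and ms(g) ≤ k. If f and g agree on some Hamming ball of radius 2k in {0,1}^n (i.e., there exists z ∈ {0,1}^n with f(x) = g(x) for all x with d_H(x,z) ≤ 2k), then f = g on all of {0,1}^n. In other words, any function with maximum sensitivity at most k is uniquely determined by its values on any Hamming ball of radius 2k. -/
open Finset

/-- Flip the `i`-th bit of `x ∈ {0,1}^n`. -/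
def flipBit {n : ℕ} (x : Fin n → Bool) (i : Fin n) : Fin n → Bool :=
  Function.update x i (!x i)

/-- Sensitivity of a Boolean function `f : {0,1}^n → ℤ` (with values ±1) at input `x`. -/
def sens {n : ℕ} (f : (Fin n → Bool) → ℤ) (x : Fin n → Bool) : ℕ :=
  (Finset.univ.filter (fun i : Fin n => f x ≠ f (flipBit x i))).card

/-- Maximum sensitivity `ms(f) = max_x s(f,x)`. -/
def maxSens {n : ℕ} (f : (Fin n → Bool) → ℤ) : ℕ :=
  Finset.univ.sup (fun x : Fin n → Bool => sens f x)

lemma hammingDist_flipBit_lt {n : ℕ} {x z : Fin n → Bool} {i : Fin n} (hi : x i ≠ z i) :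
    hammingDist (flipBit x i) z < hammingDist x z := by
  refine Finset.card_lt_card (Finset.ssubset_iff_of_subset ?_ |>.2 ⟨i, ?_, ?_⟩)
  · intro j hj
    by_cases hji : j = i
    · simpa [hji] using hi
    · have hj' := (Finset.mem_filter.1 hj).2
      simpa [flipBit, hji] using hj'
  · simpa using hi
  · intro hj
    have hj' := (Finset.mem_filter.1 hj).2
    simp only [flipBit, Function.update_self] at hj'
    exact hj' (Bool.not_eq.2 hi)

lemma sens_le_maxSens {n : ℕ} (f : (Fin n → Bool) → ℤ) (x : Fin n → Bool) :
    sens f x ≤ maxSens f :=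
  Finset.le_sup (f := fun x => sens f x) (Finset.mem_univ x)

/-- If `f` and `g` differ at `x` but agree at all neighbours of `x` closer to `z`, then each of
these neighbours witnesses sensitivity of `f` or of `g` at `x`. -/
lemma hammingDist_le_sens_add_sens {n : ℕ} {f g : (Fin n → Bool) → ℤ} {x z : Fin n → Bool}
    (hx : f x ≠ g x) (h : ∀ i, x i ≠ z i → f (flipBit x i) = g (flipBit x i)) :
    hammingDist x z ≤ sens f x + sens g x := by
  refine le_trans (Finset.card_le_card ?_) (Finset.card_union_le _ _)
  intro i hi
  have hi' : x i ≠ z i := by simpa using hi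
  simp only [Finset.mem_union, Finset.mem_filter, Finset.mem_univ, true_and]
  by_contra! hc
  exact hx (hc.1.trans ((h i hi').trans hc.2.symm))

/-- A function of maximum sensitivity at most `k` is uniquely determined by its values
on any Hamming ball of radius `2k`. -/
theorem eq_of_eq_on_hammingBall {n k : ℕ} (f g : (Fin n → Bool) → ℤ)
    (hf : ∀ x, f x = 1 ∨ f x = -1) (hg : ∀ x, g x = 1 ∨ g x = -1)
    (hfs : maxSens f ≤ k) (hgs : maxSens g ≤ k)
    (hball : ∃ z : Fin n → Bool, ∀ x : Fin n → Bool, hammingDist x z ≤ 2 * k → f x = g x) :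
    ∀ x : Fin n → Bool, f x = g x := by
  obtain ⟨z, hz⟩ := hball
  intro x
  induction hd : hammingDist x z using Nat.strong_induction_on generalizing x with
  | _ d ih =>
    subst hd
    by_contra hx
    have hle := hammingDist_le_sens_add_sens (z := z) hx
      fun i hi => ih _ (hammingDist_flipBit_lt hi) _ rfl
    have hfx := sens_le_maxSens f x
    have hgx := sens_le_maxSens g x
    exact hx (hz x (by lia))
end

section
/- Let F_k be the class of all Boolean functions f : {0,1}^n → {±1} whose maximum sensitivity is at most k, where 0 ≤ k ≤ n. Then the cardinality of this class satisfies |F_k| ≤ 2^{Σ_{i=0}^{2k} C(n,i)}, where C(n,i) denotes the binomial coefficient. -/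
open Finset

/-- The set of coordinates at which `x` is `true`. -/
def trueSet {n : ℕ} (x : Fin n → Bool) : Finset (Fin n) :=
  univ.filter (fun i => x i = true)

lemma trueSet_flipBit {n : ℕ} {x : Fin n → Bool} {i : Fin n} (hi : i ∈ trueSet x) :
    trueSet (flipBit x i) = (trueSet x).erase i := by
  ext j
  by_cases hj : j = i <;> simp_all [trueSet, flipBit, Function.update_apply]

/-- A function of maximum sensitivity at most `k` is determined by its values on the Hamming ball
of radius `2 * k` around the origin. -/
lemma eq_of_eqOn_ball {n k : ℕ} {f g : (Fin n → Bool) → ℤ} (hf : maxSens f ≤ k)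
    (hg : maxSens g ≤ k) (h : ∀ x, #(trueSet x) ≤ 2 * k → f x = g x) : f = g := by
  suffices H : ∀ m x, #(trueSet x) = m → f x = g x from funext fun x => H _ x rfl
  intro m
  induction m using Nat.strong_induction_on with
  | _ m ih =>
    intro x hx
    by_cases hm : m ≤ 2 * k
    · exact h x (hx.trans_le hm)
    by_contra hne
    have hsub : trueSet x ⊆ univ.filter (fun i => f x ≠ f (flipBit x i)) ∪
        univ.filter (fun i => g x ≠ g (flipBit x i)) := by
      intro i hi
      have hcard := card_erase_lt_of_mem hi
      rw [← trueSet_flipBit hi, hx] at hcard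
      have heq := ih _ hcard (flipBit x i) rfl
      simp only [mem_union, mem_filter, mem_univ, true_and]
      by_contra! hc
      exact hne (hc.1.trans (heq.trans hc.2.symm))
    have hle : #(trueSet x) ≤ sens f x + sens g x :=
      (card_le_card hsub).trans (card_union_le _ _)
    have := sens_le_maxSens f x
    have := sens_le_maxSens g x
    omega

/-- The subsets of `Fin n` with at most `r` elements. -/
def smallSets (n r : ℕ) : Finset (Finset (Fin n)) :=
  univ.filter (fun S => #S ≤ r)

lemma card_smallSets_le (n r : ℕ) :
    #(smallSets n r) ≤ ∑ i ∈ range (r + 1), n.choose i := by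
  have hsub : smallSets n r ⊆
      (range (r + 1)).biUnion (fun i => powersetCard i (univ : Finset (Fin n))) := by
    intro S hS
    simpa [smallSets, mem_powersetCard, Nat.lt_succ_iff] using hS
  refine (card_le_card hsub).trans (card_biUnion_le.trans_eq ?_)
  simp

/-- The class `F_k` of Boolean functions `{0,1}^n → {±1}` with `ms(f) ≤ k` has at most
`2^{Σ_{i=0}^{2k} C(n,i)}` members. -/
theorem card_lowSens_le {n k : ℕ} (hk : k ≤ n) :
    Set.ncard {f : (Fin n → Bool) → ℤ | (∀ x, f x = 1 ∨ f x = -1) ∧ maxSens f ≤ k} ≤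
      2 ^ (∑ i ∈ Finset.range (2 * k + 1), n.choose i) := by
  let restrict : ((Fin n → Bool) → ℤ) → (smallSets n (2 * k) → Bool) :=
    fun f S => decide (f (fun i => decide (i ∈ S.1)) = 1)
  have hinj : Set.InjOn restrict
      {f : (Fin n → Bool) → ℤ | (∀ x, f x = 1 ∨ f x = -1) ∧ maxSens f ≤ k} := by
    rintro f ⟨hf, hfk⟩ g ⟨hg, hgk⟩ hfg
    refine eq_of_eqOn_ball hfk hgk fun x hx => ?_
    have hiff := congrFun hfg ⟨trueSet x, by simpa [smallSets] using hx⟩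
    have hxx : (fun i => decide (i ∈ trueSet x)) = x := by
      funext i
      simp [trueSet]
    simp only [restrict, hxx, decide_eq_decide] at hiff
    rcases hf x with h1 | h1 <;> rcases hg x with h2 | h2 <;> simp_all
  calc _ ≤ (Set.univ : Set (smallSets n (2 * k) → Bool)).ncard :=
        Set.ncard_le_ncard_of_injOn restrict (fun _ _ => Set.mem_univ _) hinj
    _ = 2 ^ #(smallSets n (2 * k)) := by simp [Set.ncard_univ]
    _ ≤ _ := Nat.pow_le_pow_right two_pos (card_smallSets_le n (2 * k))
end
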